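/- Let s ∈ ℝ and let f_n(x) = 2^{-ns} φ(x) sin((17/12)·2^n x) and g_n(x) = 2^{-n} φ(x). For every sufficiently large integer n, the Fourier transform of the product g_n ∂_x f_n is supported in the annulus {ξ ∈ ℝ : (17/12)·2^n − 1 ≤ |ξ| ≤ (17/12)·2^n + 1}. -/

import Mathlib

open MeasureTheory Filter

/-- Fourier transform with convention `f̂(ξ) = ∫ f(x) e^{-i x ξ} dx`. -/
noncomputable def fourierT (f : ℝ → ℂ) (ξ : ℝ) : ℂ :=
  ∫ x : ℝ, f x * Complex.exp (-(Complex.I * x * ξ))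

/-- The `H^s(ℝ)` norm, `‖f‖_{H^s}² = ∫ (1+|ξ|²)^s |f̂(ξ)|² dξ`. -/
noncomputable def sobolevNorm (s : ℝ) (f : ℝ → ℂ) : ℝ :=
  Real.sqrt (∫ ξ : ℝ, (1 + ξ ^ 2) ^ s * ‖fourierT f ξ‖ ^ 2)

/-- Membership in `H^s(ℝ)` (for integrable representatives). -/
def MemSobolev (s : ℝ) (f : ℝ → ℂ) : Prop :=
  MeasureTheory.Integrable f ∧
    MeasureTheory.Integrable (fun ξ : ℝ => (1 + ξ ^ 2) ^ s * ‖fourierT f ξ‖ ^ 2)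

/-- The high-frequency functions `f_n(x) = 2^{-ns} φ(x) sin((17/12)·2^n x)`. -/
noncomputable def fn (s : ℝ) (φ : ℝ → ℂ) (n : ℕ) : ℝ → ℂ :=
  fun x => (((2 : ℝ) ^ (-(n : ℝ) * s) * Real.sin (17 / 12 * 2 ^ n * x) : ℝ) : ℂ) * φ x

/-- The low-frequency functions `g_n(x) = 2^{-n} φ(x)`. -/
noncomputable def gn (φ : ℝ → ℂ) (n : ℕ) : ℝ → ℂ :=
  fun x => (((2 : ℝ) ^ (-(n : ℝ)) : ℝ) : ℂ) * φ x

/-- `φ̂` is an even, real-valued, nonnegative function in `C_c^∞(ℝ)` with `φ̂ = 1` on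
`{|ξ| ≤ 1/4}` and `φ̂ = 0` on `{|ξ| ≥ 1/2}`, and `φ` is the (continuous, integrable)
function on `ℝ` whose Fourier transform is `φ̂`. -/
structure CutoffPair (φhat : ℝ → ℝ) (φ : ℝ → ℂ) : Prop where
  smooth : ContDiff ℝ (⊤ : ℕ∞) φhat
  compactSupport : HasCompactSupport φhat
  even : ∀ ξ : ℝ, φhat (-ξ) = φhat ξ
  nonneg : ∀ ξ : ℝ, 0 ≤ φhat ξ
  eq_one : ∀ ξ : ℝ, |ξ| ≤ 1 / 4 → φhat ξ = 1
  eq_zero : ∀ ξ : ℝ, 1 / 2 ≤ |ξ| → φhat ξ = 0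
  continuous : Continuous φ
  integrable : MeasureTheory.Integrable φ
  fourier_eq : ∀ ξ : ℝ, fourierT φ ξ = (φhat ξ : ℂ)

/-!
Multiplying `φ` by `sin (A x)` translates its spectrum by `±A`, differentiation does not enlarge the
spectrum, and the spectrum of a product lies in the sum of the spectra of its factors. With `φ̂`
supported in `|ξ| < 1/2`, every frequency of `g_n ∂ₓ f_n` is thus of the form `±A + u + v` with
`A = (17/12)·2^n` and `|u|, |v| < 1/2`.

For the product `g ∂ₓ f`, Fourier inversion exhibits `∂ₓ f` as the inverse transform of the
compactly supported function `iη f̂(η)`, and Fubini turns the transform of the product into the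
convolution of `iη f̂(η)` with `ĝ`.
-/

open Function Bornology
open scoped FourierTransform Pointwise

section Product

variable {V E : Type*} [NormedAddCommGroup V] [InnerProductSpace ℝ V] [FiniteDimensional ℝ V]
  [MeasurableSpace V] [BorelSpace V] [NormedAddCommGroup E] [NormedSpace ℂ E] [CompleteSpace E]

lemma fourier_fourierInv_smul {h : V → ℂ} {g : V → E} (hh : Integrable h) (hg : Integrable g)
    (ξ : V) : 𝓕 (fun x ↦ 𝓕⁻ h x • g x) ξ = ∫ w, h w • 𝓕 g (ξ - w) := by
  let modulated : V → E := fun x ↦ Real.fourierChar (-inner ℝ x ξ) • g x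
  have modulated_integrable : Integrable modulated :=
    (Real.fourierIntegral_convergent_iff ξ).2 hg
  have fourierInv_modulated (w : V) : 𝓕⁻ modulated w = 𝓕 g (ξ - w) := by
    rw [Real.fourierInv_eq, Real.fourier_eq]
    congr with x
    rw [smul_smul, ← AddChar.map_add_eq_mul, inner_sub_right]
    congr 2
    ring
  have neg_inner_flip : (-innerₗ V).flip = -innerₗ V := by
    ext x y
    simp [real_inner_comm]
  calc 𝓕 (fun x ↦ 𝓕⁻ h x • g x) ξ = ∫ x, 𝓕⁻ h x • modulated x := by
        rw [Real.fourier_eq]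
        congr with x
        exact smul_comm _ _ _
    _ = ∫ w, h w • 𝓕⁻ modulated w := by
        have := VectorFourier.integral_fourierIntegral_smul_eq_flip (L := -innerₗ V)
          Real.continuous_fourierChar continuous_inner.neg hh modulated_integrable
        rwa [neg_inner_flip] at this
    _ = ∫ w, h w • 𝓕 g (ξ - w) := by simp only [fourierInv_modulated]

lemma support_fourier_fourierInv_smul_subset {h : V → ℂ} {g : V → E} (hh : Integrable h)
    (hg : Integrable g) :
    support (𝓕 fun x ↦ 𝓕⁻ h x • g x) ⊆ support h + support (𝓕 g) := by
  intro ξ hξ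
  rw [mem_support, fourier_fourierInv_smul hh hg] at hξ
  obtain ⟨w, hw⟩ := exists_ne_zero_of_integral_ne_zero hξ
  exact ⟨w, left_ne_zero_of_smul hw, ξ - w, right_ne_zero_of_smul hw, add_sub_cancel w ξ⟩

end Product

lemma deriv_fourierInv {E : Type*} [NormedAddCommGroup E] [NormedSpace ℂ E] {h : ℝ → E}
    (hh : Integrable h) (hh' : Integrable fun w : ℝ ↦ w • h w) :
    deriv (𝓕⁻ h) = 𝓕⁻ fun w : ℝ ↦ (2 * Real.pi * Complex.I * w) • h w := by
  have hneg : Integrable fun w : ℝ ↦ w • h (-w) := by simpa using hh'.comp_neg.neg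
  rw [Real.fourierInv_eq_fourier_comp_neg, Real.fourierInv_eq_fourier_comp_neg,
    Real.deriv_fourier hh.comp_neg hneg]
  simp

lemma support_fourier_mul_deriv_subset {f g : ℝ → ℂ} (hfc : Continuous f) (hf : Integrable f)
    (hf_supp : IsBounded (support (𝓕 f))) (hg : Integrable g) :
    support (𝓕 fun x ↦ g x * deriv f x) ⊆ support (𝓕 f) + support (𝓕 g) := by
  have hF_cont : Continuous (𝓕 f) :=
    VectorFourier.fourierIntegral_continuous Real.continuous_fourierChar continuous_inner hf
  have hF_compact : HasCompactSupport (𝓕 f) := hf_supp.isCompact_closure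
  have integrable_mul {p : ℝ → ℂ} (hp : Continuous p) : Integrable fun w ↦ p w • 𝓕 f w :=
    (hp.smul hF_cont).integrable_of_hasCompactSupport hF_compact.smul_left
  have hF : Integrable (𝓕 f) := hF_cont.integrable_of_hasCompactSupport hF_compact
  have deriv_eq : deriv f = 𝓕⁻ fun w : ℝ ↦ (2 * Real.pi * Complex.I * w) • 𝓕 f w := by
    rw [← deriv_fourierInv hF (integrable_mul Complex.continuous_ofReal),
      hfc.fourierInv_fourier_eq hf hF]
  simp only [deriv_eq, mul_comm (g _)]
  exact (support_fourier_fourierInv_smul_subset (integrable_mul (by fun_prop)) hg).trans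
    (Set.add_subset_add_right fun _ ↦ right_ne_zero_of_smul)

lemma fourierT_eq_fourier (f : ℝ → ℂ) (ξ : ℝ) : fourierT f ξ = 𝓕 f ((2 * Real.pi)⁻¹ * ξ) := by
  rw [Real.fourier_real_eq_integral_exp_smul, fourierT]
  congr with x
  rw [smul_eq_mul, mul_comm]
  congr 2
  push_cast
  field_simp

lemma support_fourierT (f : ℝ → ℂ) : support (fourierT f) = (2 * Real.pi) • support (𝓕 f) := by
  ext ξ
  rw [Set.mem_smul_set_iff_inv_smul_mem₀ Real.two_pi_pos.ne', mem_support, mem_support,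
    fourierT_eq_fourier, smul_eq_mul]

lemma support_fourierT_mul_deriv_subset {f g : ℝ → ℂ} (hfc : Continuous f) (hf : Integrable f)
    (hf_supp : IsBounded (support (fourierT f))) (hg : Integrable g) :
    support (fourierT fun x ↦ g x * deriv f x) ⊆ support (fourierT f) + support (fourierT g) := by
  have hF_supp : IsBounded (support (𝓕 f)) := by
    simpa only [support_fourierT, inv_smul_smul₀ Real.two_pi_pos.ne'] using
      hf_supp.smul₀ (2 * Real.pi)⁻¹
  simp only [support_fourierT, ← smul_add]
  exact Set.smul_set_mono (support_fourier_mul_deriv_subset hfc hf hF_supp hg)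

lemma fourierT_const_mul (c : ℂ) (f : ℝ → ℂ) (ξ : ℝ) :
    fourierT (fun x ↦ c * f x) ξ = c * fourierT f ξ := by
  simp only [fourierT, mul_assoc, integral_const_mul]

lemma integrable_mul_exp_neg_I_mul {f : ℝ → ℂ} (hf : Integrable f) (ξ : ℝ) :
    Integrable fun x : ℝ ↦ f x * Complex.exp (-(Complex.I * x * ξ)) :=
  hf.mul_bdd (c := 1) (by fun_prop) (.of_forall fun x ↦ by simp [Complex.norm_exp])

lemma integrable_sin_mul {φ : ℝ → ℂ} (hφ : Integrable φ) (A : ℝ) :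
    Integrable fun x : ℝ ↦ Complex.sin (A * x) * φ x := by
  refine hφ.bdd_mul (c := 1) (by fun_prop) (.of_forall fun x ↦ ?_)
  rw [← Complex.ofReal_mul, ← Complex.ofReal_sin, Complex.norm_real]
  exact Real.abs_sin_le_one _

lemma fourierT_sin_mul {φ : ℝ → ℂ} (hφ : Integrable φ) (A ξ : ℝ) :
    fourierT (fun x ↦ Complex.sin (A * x) * φ x) ξ =
      Complex.I / 2 * (fourierT φ (ξ + A) - fourierT φ (ξ - A)) := by
  unfold fourierT
  rw [← integral_sub (integrable_mul_exp_neg_I_mul hφ _) (integrable_mul_exp_neg_I_mul hφ _),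
    ← integral_const_mul]
  congr with x
  have exp_shift (B : ℝ) : Complex.exp (-(Complex.I * x * (ξ + B))) =
      Complex.exp (-(B * x) * Complex.I) * Complex.exp (-(Complex.I * x * ξ)) := by
    rw [← Complex.exp_add]
    ring_nf
  have exp_shift_neg := exp_shift (-A)
  push_cast [← sub_eq_add_neg, neg_mul, neg_neg] at exp_shift_neg ⊢
  rw [exp_shift, exp_shift_neg, Complex.sin]
  ring

lemma support_fourierT_sin_mul_subset {φ : ℝ → ℂ} (hφ : Integrable φ) (A : ℝ) :
    support (fourierT fun x ↦ Complex.sin (A * x) * φ x) ⊆ {-A, A} + support (fourierT φ) := by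
  intro ξ hξ
  rw [mem_support, fourierT_sin_mul hφ] at hξ
  by_cases h : fourierT φ (ξ + A) = 0
  · have h' : fourierT φ (ξ - A) ≠ 0 := fun h' ↦ hξ (by simp [h, h'])
    exact ⟨A, by simp, ξ - A, h', by simp⟩
  · exact ⟨-A, by simp, ξ + A, h, by simp⟩

lemma support_fourierT_mul_deriv_sin_mul_subset {g φ : ℝ → ℂ} (hg : Integrable g)
    (hφc : Continuous φ) (hφ : Integrable φ) (hφ_supp : IsBounded (support (fourierT φ))) (A : ℝ) :
    support (fourierT fun x ↦ g x * deriv (fun y : ℝ ↦ Complex.sin (A * y) * φ y) x) ⊆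
      {-A, A} + support (fourierT φ) + support (fourierT g) := by
  have sin_mul_subset := support_fourierT_sin_mul_subset hφ A
  have sin_mul_supp := (((Set.toFinite {-A, A}).isBounded).add hφ_supp).subset sin_mul_subset
  exact (support_fourierT_mul_deriv_subset (by fun_prop) (integrable_sin_mul hφ A)
    sin_mul_supp hg).trans (Set.add_subset_add_right sin_mul_subset)

lemma gn_mul_deriv_fn (s : ℝ) (φ : ℝ → ℂ) (n : ℕ) (x : ℝ) :
    gn φ n x * deriv (fn s φ n) x =
      ((2 : ℝ) ^ (-(n : ℝ)) : ℝ) * ((2 : ℝ) ^ (-(n : ℝ) * s) : ℝ) *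
        (φ x * deriv (fun y : ℝ ↦ Complex.sin ((17 / 12 * 2 ^ n : ℝ) * y) * φ y) x) := by
  have fn_eq : fn s φ n = fun y : ℝ ↦ ((2 : ℝ) ^ (-(n : ℝ) * s) : ℝ) *
      (Complex.sin ((17 / 12 * 2 ^ n : ℝ) * y) * φ y) := by
    ext y
    simp only [fn, Complex.ofReal_mul, Complex.ofReal_sin, mul_assoc]
  rw [fn_eq, deriv_const_mul_field, gn]
  ring

theorem fourier_support_gn_deriv_fn_general (s : ℝ) {φ : ℝ → ℂ} {r : ℝ} (hφc : Continuous φ)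
    (hφ : Integrable φ) (hφ_band : ∀ ξ : ℝ, r / 2 ≤ |ξ| → fourierT φ ξ = 0) (n : ℕ) (ξ : ℝ)
    (hξ : fourierT (fun x ↦ gn φ n x * deriv (fn s φ n) x) ξ ≠ 0) :
    17 / 12 * 2 ^ n - r ≤ |ξ| ∧ |ξ| ≤ 17 / 12 * 2 ^ n + r := by
  have abs_lt_of_mem_support {ξ : ℝ} (h : ξ ∈ support (fourierT φ)) : |ξ| < r / 2 :=
    not_le.1 fun hr ↦ h (hφ_band ξ hr)
  have supp_bounded : IsBounded (support (fourierT φ)) :=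
    Metric.isBounded_ball.subset fun ξ h ↦ mem_ball_zero_iff.2 (abs_lt_of_mem_support h)
  simp only [gn_mul_deriv_fn, fourierT_const_mul] at hξ
  obtain ⟨_, ⟨a, ha, u, hu, rfl⟩, v, hv, rfl⟩ :=
    support_fourierT_mul_deriv_sin_mul_subset hφ hφc hφ supp_bounded _ (right_ne_zero_of_mul hξ)
  have abs_a : |a| = 17 / 12 * 2 ^ n := by
    rcases ha with rfl | rfl <;> norm_num
  have abs_uv : |u + v| < r := by
    linarith [abs_add_le u v, abs_lt_of_mem_support hu, abs_lt_of_mem_support hv]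
  simp only [← abs_a, add_assoc]
  constructor
  · linarith [abs_sub_abs_le_abs_add a (u + v)]
  · linarith [abs_add_le a (u + v)]

/-- For all sufficiently large `n`, the Fourier transform of `g_n ∂_x f_n` is supported in
the annulus `{ξ : (17/12)·2^n − 1 ≤ |ξ| ≤ (17/12)·2^n + 1}`. -/
theorem fourier_support_gn_deriv_fn (s : ℝ) (φhat : ℝ → ℝ) (φ : ℝ → ℂ)
    (hφ : CutoffPair φhat φ) :
    ∃ N : ℕ, ∀ n : ℕ, N ≤ n → ∀ ξ : ℝ,
      fourierT (fun x => gn φ n x * deriv (fn s φ n) x) ξ ≠ 0 →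
        17 / 12 * 2 ^ n - 1 ≤ |ξ| ∧ |ξ| ≤ 17 / 12 * 2 ^ n + 1 := by
  have band (ξ : ℝ) (h : 1 / 2 ≤ |ξ|) : fourierT φ ξ = 0 := by simp [hφ.fourier_eq, hφ.eq_zero ξ h]
  exact ⟨0, fun n _ ↦ fourier_support_gn_deriv_fn_general s hφ.continuous hφ.integrable band n⟩
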